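/- arXiv:2205.15557 — 2 statements merged into one kernel-verified Lean document; each statement's English description precedes it below -/
import Mathlib

section
/- Let L : ℕ → ℝ with L(0) = 0 and L(t) ≥ 0 for all t, let h, g : ℕ → ℝ, and let B ∈ ℝ, h' ∈ ℝ, h₀ ∈ ℝ, ε > 0, V ≥ 0 be such that (i) L(t+1) − L(t) + V·h(t) ≤ B − ε·g(t) + V·h' for all t ∈ ℕ, and (ii) (1/T)·Σ_{t=0}^{T−1} h(t) ≥ h₀ for every integer T ≥ 1. Then for every integer T ≥ 1, (1/T)·Σ_{t=0}^{T−1} g(t) ≤ B/ε + V·(h' − h₀)/ε. -/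
/-- Queue-backlog guarantee via telescoping the drift-plus-penalty bound:
the time-averaged backlog `g` is at most `B/ε + V·(h' − h₀)/ε`. -/
theorem backlog_performance (L : ℕ → ℝ) (hL0 : L 0 = 0) (hL : ∀ t, 0 ≤ L t)
    (h g : ℕ → ℝ) (B h' h₀ ε V : ℝ) (hε : 0 < ε) (hV : 0 ≤ V)
    (hdrift : ∀ t : ℕ, L (t + 1) - L t + V * h t ≤ B - ε * g t + V * h')
    (hcost : ∀ T : ℕ, 1 ≤ T → h₀ ≤ (1 / (T : ℝ)) * ∑ t ∈ Finset.range T, h t) :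
    ∀ T : ℕ, 1 ≤ T →
      (1 / (T : ℝ)) * ∑ t ∈ Finset.range T, g t ≤ B / ε + V * (h' - h₀) / ε := by
  intro T hT
  have key : ∀ n : ℕ, L n + V * ∑ t ∈ Finset.range n, h t
      ≤ n * (B + V * h') - ε * ∑ t ∈ Finset.range n, g t := by
    intro n
    induction n with
    | zero => simp [hL0]
    | succ k ih =>
      rw [Finset.sum_range_succ, Finset.sum_range_succ]
      push_cast
      have := hdrift k
      linarith
  have hTpos : (0 : ℝ) < T := by exact_mod_cast hT
  have h1 := hcost T hT
  rw [one_div, inv_mul_eq_div, le_div_iff₀ hTpos] at h1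
  have h2 := mul_le_mul_of_nonneg_left h1 hV
  have h3 := key T
  have h4 := hL T
  rw [one_div, inv_mul_eq_div, ← add_div, div_le_div_iff₀ hTpos hε]
  linarith
end

section
/- Let a : ℕ → ℝ be a sequence with a(t) ≥ 0 for all t, and suppose there exist constants A ≥ 0 and M ≥ 0 such that a(t+1) ≤ a(t) + A for all t and (1/T)·Σ_{t=0}^{T−1} a(t) ≤ M for every integer T ≥ 1. Then a(T)/T → 0 as T → ∞. -/
/-- Window estimate. -/
theorem window_bound (a : ℕ → ℝ) (ha : ∀ t, 0 ≤ a t) (A : ℝ) (hA : 0 ≤ A)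
    (hstep : ∀ t : ℕ, a (t + 1) ≤ a t + A) (T k : ℕ) :
    (k : ℝ) * a (T + k) ≤ ∑ t ∈ Finset.range (T + k), a t + A * (k : ℝ) ^ 2 := by
  induction k with
  | zero => simpa using Finset.sum_nonneg (fun t _ => ha t)
  | succ k ih =>
    have h1 := hstep (T + k)
    have hk : (0 : ℝ) ≤ k := Nat.cast_nonneg k
    rw [← Nat.add_assoc, Finset.sum_range_succ]
    push_cast
    have h2 := mul_le_mul_of_nonneg_left h1 (by linarith : (0 : ℝ) ≤ (k : ℝ) + 1)
    have h3 := mul_nonneg hA hk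
    nlinarith

/-- Mean-rate stability: if a nonnegative sequence `a` has bounded per-slot
increments and all its time averages are bounded by `M`, then `a T / T → 0`. -/
theorem mean_rate_stability (a : ℕ → ℝ) (ha : ∀ t, 0 ≤ a t)
    (A M : ℝ) (hA : 0 ≤ A) (hM : 0 ≤ M)
    (hstep : ∀ t : ℕ, a (t + 1) ≤ a t + A)
    (havg : ∀ T : ℕ, 1 ≤ T → (1 / (T : ℝ)) * ∑ t ∈ Finset.range T, a t ≤ M) :
    Filter.Tendsto (fun T : ℕ => a T / (T : ℝ)) Filter.atTop (nhds 0) := by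
  rw [Metric.tendsto_atTop]
  intro e he
  obtain ⟨k, hk⟩ := exists_nat_gt (2 * M / e)
  have hk0 : (0 : ℝ) < k := lt_of_le_of_lt (by positivity) hk
  obtain ⟨N, hN⟩ := exists_nat_gt (2 * (A * k) / e)
  refine ⟨N + k + 1, fun T hT => ?_⟩
  have hT0 : (0 : ℝ) < T := by exact_mod_cast (by omega : 0 < T)
  have hNT : (N : ℝ) ≤ T := by exact_mod_cast (by omega : N ≤ T)
  have hw := window_bound a ha A hA hstep (T - k) k
  rw [Nat.sub_add_cancel (by omega)] at hw
  have hav := havg T (by omega)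
  rw [one_div, inv_mul_le_iff₀ hT0] at hav
  rw [div_lt_iff₀ he] at hk hN
  rw [Real.dist_eq, sub_zero, abs_of_nonneg (div_nonneg (ha T) hT0.le), div_lt_iff₀ hT0]
  have h1 : 2 * M * T < k * e * T := mul_lt_mul_of_pos_right hk hT0
  have h2 : 2 * (A * k) < T * e := lt_of_lt_of_le hN (mul_le_mul_of_nonneg_right hNT he.le)
  have h3 := mul_lt_mul_of_pos_right h2 hk0
  refine lt_of_mul_lt_mul_left ?_ hk0.le
  nlinarith
end
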